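/- arXiv:1307.3685 — 4 statements merged into one kernel-verified Lean document; each statement's English description precedes it below -/
import Mathlib

section
/- Let H₁ and H₂ be complex Hilbert spaces, let T : H₁ → H₂ be a closed, densely defined linear operator with von Neumann adjoint T*, and let C > 0 be a constant. Then the estimate ‖u‖ ≤ C‖Tu‖ holds for every u ∈ Dom T lying in the closure of Range T* if and only if the estimate ‖v‖ ≤ C‖T*v‖ holds for every v ∈ Dom T* lying in the closure of Range T. In particular, the best constants in the two estimates coincide. -/
theorem aux_estimate {E F : Type*} [NormedAddCommGroup E] [InnerProductSpace ℂ E] [CompleteSpace E]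
    [NormedAddCommGroup F] [InnerProductSpace ℂ F]
    (T : E →ₗ.[ℂ] F) (S : F →ₗ.[ℂ] E) (hST : S.IsFormalAdjoint T)
    (hker : ∀ k ∈ (LinearMap.range S.toFun)ᗮ, (k, (0 : F)) ∈ T.graph)
    (C : ℝ)
    (h : ∀ u : T.domain, (u : E) ∈ closure ((LinearMap.range S.toFun : Submodule ℂ E) : Set E) →
          ‖(u : E)‖ ≤ C * ‖T u‖)
    (v : S.domain) (hv : (v : F) ∈ closure ((LinearMap.range T.toFun : Submodule ℂ F) : Set F)) :
    ‖(v : F)‖ ≤ C * ‖S v‖ := by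
  have key : ∀ w ∈ closure ((LinearMap.range T.toFun : Submodule ℂ F) : Set F),
      ‖inner ℂ (v : F) w‖ ≤ C * ‖S v‖ * ‖w‖ := by
    intro w hw
    have hcl : IsClosed {w : F | ‖inner ℂ (v : F) w‖ ≤ C * ‖S v‖ * ‖w‖} :=
      isClosed_le (by fun_prop) (by fun_prop)
    refine closure_minimal ?_ hcl hw
    rintro _ ⟨u, rfl⟩
    obtain ⟨y, hy, z, hz, hyz⟩ :=
      (LinearMap.range S.toFun).topologicalClosure.exists_add_mem_mem_orthogonal (u : E)
    rw [Submodule.orthogonal_closure] at hz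
    have hzg := hker z hz
    have hug : ((u : E), T u) ∈ T.graph := T.mem_graph u
    have hyg : (y, T u) ∈ T.graph := by
      have := T.graph.sub_mem hug hzg
      simpa [hyz] using this
    obtain ⟨y', hy', hTy⟩ := T.mem_graph_iff.1 hyg
    simp only at hy' hTy
    have h1 : ‖(y' : E)‖ ≤ C * ‖T y'‖ := h y' (by rw [hy']; exact hy)
    change ‖inner ℂ (v : F) (T u)‖ ≤ C * ‖S v‖ * ‖T u‖
    rw [← hTy, ← hST v y']
    calc ‖inner ℂ (S v) (y' : E)‖ ≤ ‖S v‖ * ‖(y' : E)‖ := norm_inner_le_norm _ _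
      _ ≤ ‖S v‖ * (C * ‖T y'‖) := by gcongr
      _ = _ := by ring
  have h2 := key v hv
  rw [inner_self_eq_norm_sq_to_K, norm_pow, RCLike.norm_ofReal, abs_norm, sq] at h2
  rcases (norm_nonneg (v : F)).eq_or_lt with h0 | h0
  · have hv0 : v = 0 := Subtype.ext (norm_eq_zero.1 h0.symm)
    subst hv0
    simp
  · exact le_of_mul_le_mul_right h2 h0

theorem aux_ker {E F : Type*} [NormedAddCommGroup E] [InnerProductSpace ℂ E] [CompleteSpace E]
    [NormedAddCommGroup F] [InnerProductSpace ℂ F] [CompleteSpace F]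
    (T : E →ₗ.[ℂ] F) (hd : Dense (T.domain : Set E)) (hc : T.IsClosed)
    (k : E) (hk : k ∈ (LinearMap.range T.adjoint.toFun)ᗮ) : (k, (0 : F)) ∈ T.graph := by
  let G : Submodule ℂ (WithLp 2 (E × F)) :=
    T.graph.comap (WithLp.linearEquiv 2 ℂ (E × F) : WithLp 2 (E × F) →ₗ[ℂ] E × F)
  have hG : IsClosed (G : Set (WithLp 2 (E × F))) :=
    IsClosed.preimage (WithLp.prod_continuous_ofLp 2 E F) hc
  have : CompleteSpace G := hG.completeSpace_coe
  obtain ⟨y, hy, z, hz, hyz⟩ := G.exists_add_mem_mem_orthogonal (WithLp.toLp 2 (k, (0 : F)))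
  have hzT : ∀ x : T.domain, inner ℂ (-z.fst) (x : E) = inner ℂ z.snd (T x) := by
    intro x
    have h1 := (Submodule.mem_orthogonal' _ _).1 hz (WithLp.toLp 2 ((x : E), T x)) (T.mem_graph x)
    simp only [WithLp.prod_inner_apply] at h1
    change inner ℂ z.fst (x : E) + inner ℂ z.snd (T x) = 0 at h1
    rw [inner_neg_left]
    linear_combination -h1
  have hdom := T.mem_adjoint_domain_of_exists z.snd ⟨_, hzT⟩
  have hap := LinearPMap.adjoint_apply_eq hd ⟨z.snd, hdom⟩ hzT
  have hzk : inner ℂ z (WithLp.toLp 2 (k, (0 : F))) = 0 := by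
    have := (Submodule.mem_orthogonal _ _).1 hk _ ⟨⟨z.snd, hdom⟩, hap⟩
    rw [inner_neg_left, neg_eq_zero] at this
    simpa [WithLp.prod_inner_apply] using this
  have hz0 : z = 0 := by
    rw [hyz, inner_add_right, (Submodule.mem_orthogonal' _ _).1 hz y hy, zero_add] at hzk
    exact inner_self_eq_zero.1 hzk
  rw [hz0, add_zero] at hyz
  rw [← hyz] at hy
  exact hy

theorem aux_ker' {E F : Type*} [NormedAddCommGroup E] [InnerProductSpace ℂ E] [CompleteSpace E]
    [NormedAddCommGroup F] [InnerProductSpace ℂ F]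
    (T : E →ₗ.[ℂ] F) (hd : Dense (T.domain : Set E))
    (k : F) (hk : k ∈ (LinearMap.range T.toFun)ᗮ) : (k, (0 : E)) ∈ T.adjoint.graph := by
  have h : ∀ x : T.domain, inner ℂ (0 : E) (x : E) = inner ℂ k (T x) := by
    intro x
    rw [inner_zero_left]
    exact ((Submodule.mem_orthogonal' _ _).1 hk _ ⟨x, rfl⟩).symm
  have hdom := T.mem_adjoint_domain_of_exists k ⟨_, h⟩
  exact T.adjoint.mem_graph_iff.2 ⟨⟨k, hdom⟩, rfl, LinearPMap.adjoint_apply_eq hd ⟨k, hdom⟩ h⟩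



/-- Hörmander's lemma, (3) ⟺ (4) with the same constant: for a closed densely defined operator
`T` between complex Hilbert spaces and `C > 0`, the estimate `‖u‖ ≤ C‖Tu‖` for all
`u ∈ Dom T ∩ closure (Range T*)` holds iff the estimate `‖v‖ ≤ C‖T*v‖` holds for all
`v ∈ Dom T* ∩ closure (Range T)`. -/
theorem estimate_iff_estimate_adjoint
    {H₁ H₂ : Type*} [NormedAddCommGroup H₁] [InnerProductSpace ℂ H₁] [CompleteSpace H₁]
    [NormedAddCommGroup H₂] [InnerProductSpace ℂ H₂] [CompleteSpace H₂]
    (T : H₁ →ₗ.[ℂ] H₂) (hT_dense : Dense (T.domain : Set H₁)) (hT_closed : T.IsClosed)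
    (C : ℝ) (hC : 0 < C) :
    (∀ u : T.domain,
        (u : H₁) ∈ closure ((LinearMap.range T.adjoint.toFun : Submodule ℂ H₁) : Set H₁) →
          ‖(u : H₁)‖ ≤ C * ‖T u‖) ↔
      (∀ v : T.adjoint.domain,
        (v : H₂) ∈ closure ((LinearMap.range T.toFun : Submodule ℂ H₂) : Set H₂) →
          ‖(v : H₂)‖ ≤ C * ‖T.adjoint v‖) := by
  have hA := LinearPMap.adjoint_isFormalAdjoint hT_dense
  exact ⟨fun h v hv => aux_estimate T T.adjoint hA (aux_ker T hT_dense hT_closed) C h v hv,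
    fun h u hu => aux_estimate T.adjoint T hA.symm (aux_ker' T hT_dense) C h u hu⟩
end

section
/- Let H₁, H₂, H₃ be complex Hilbert spaces, let T : H₁ → H₂ and S : H₂ → H₃ be closed, densely defined linear operators with Range T ⊆ Ker S, and set H := Ker S ∩ Ker T*. Then Range T and Range S* are both closed if and only if there exists a constant C > 0 such that ‖u‖² ≤ C²(‖Su‖² + ‖T*u‖²) for every u ∈ Dom S ∩ Dom T* that is orthogonal to H. -/
section Aux

variable {E F : Type*} [NormedAddCommGroup E] [InnerProductSpace ℂ E] [CompleteSpace E]
  [NormedAddCommGroup F] [InnerProductSpace ℂ F] [CompleteSpace F]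

lemma aux_mem_graph (A : E →ₗ.[ℂ] F) (hd : Dense (A.domain : Set E)) (hc : A.IsClosed)
    (x : E) (z : F) (h : ∀ y : A.adjoint.domain, inner ℂ x (A.adjoint y) = inner ℂ z (y : F)) :
    (x, z) ∈ A.graph := by
  let e := (WithLp.linearEquiv 2 ℂ (E × F))
  let G : Submodule ℂ (WithLp 2 (E × F)) := A.graph.comap e.toLinearMap
  have hG : IsClosed (G : Set (WithLp 2 (E × F))) := by
    have : Continuous (fun p : WithLp 2 (E × F) => e p) :=
      WithLp.prod_continuous_ofLp 2 E F
    exact IsClosed.preimage this hc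
  haveI : CompleteSpace G := hG.completeSpace_coe
  have key : WithLp.toLp 2 (x, z) ∈ Gᗮᗮ := by
    rw [Submodule.mem_orthogonal']
    intro p hp
    rw [Submodule.mem_orthogonal'] at hp
    have h1 : ∀ a : A.domain, inner ℂ (-p.fst) (a : E) = inner ℂ p.snd (A a) := by
      intro a
      have h2 := hp (WithLp.toLp 2 ((a : E), A a)) (A.mem_graph a)
      rw [WithLp.prod_inner_apply] at h2
      simp only [inner_neg_left]
      exact neg_eq_of_add_eq_zero_right h2
    have hm : p.snd ∈ A.adjoint.domain := LinearPMap.mem_adjoint_domain_of_exists _ ⟨_, h1⟩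
    have h3 : A.adjoint ⟨p.snd, hm⟩ = -p.fst := LinearPMap.adjoint_apply_eq hd _ h1
    have h4 := h ⟨p.snd, hm⟩
    rw [h3, inner_neg_right] at h4
    rw [WithLp.prod_inner_apply]
    change inner ℂ x p.fst + inner ℂ z p.snd = 0
    rw [← h4]; simp
  rw [Submodule.orthogonal_orthogonal] at key
  exact key

lemma aux_adj_mem (A : E →ₗ.[ℂ] F) (hd : Dense (A.domain : Set E))
    (y : F) (w : E) (h : ∀ x : A.domain, inner ℂ w (x : E) = inner ℂ y (A x)) :
    ∃ hy : y ∈ A.adjoint.domain, A.adjoint ⟨y, hy⟩ = w :=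
  ⟨LinearPMap.mem_adjoint_domain_of_exists _ ⟨w, h⟩, LinearPMap.adjoint_apply_eq hd _ h⟩

lemma aux_mem (A : E →ₗ.[ℂ] F) (hd : Dense (A.domain : Set E)) (hc : A.IsClosed)
    (x : E) (z : F) (h : ∀ y : A.adjoint.domain, inner ℂ x (A.adjoint y) = inner ℂ z (y : F)) :
    ∃ hx : x ∈ A.domain, A ⟨x, hx⟩ = z := by
  obtain ⟨a, h1, h2⟩ := (LinearPMap.mem_graph_iff A).1 (aux_mem_graph A hd hc x z h)
  obtain ⟨a, ha⟩ := a
  simp only at h1 h2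
  subst h1
  exact ⟨ha, h2⟩

/-- closed range implies estimate -/
lemma aux_A (A : E →ₗ.[ℂ] F) (B : F →ₗ.[ℂ] E) (hc : A.IsClosed) (hAB : A.IsFormalAdjoint B)
    (hr : IsClosed ((LinearMap.range A.toFun : Submodule ℂ F) : Set F)) :
    ∃ C : ℝ, 0 < C ∧ ∀ y : B.domain, (y : F) ∈ LinearMap.range A.toFun → ‖(y : F)‖ ≤ C * ‖B y‖ := by
  have hc' : IsClosed (A.graph : Set (E × F)) := hc
  haveI : CompleteSpace A.graph := hc'.completeSpace_coe
  haveI : CompleteSpace (LinearMap.range A.toFun) := hr.completeSpace_coe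
  let f : A.graph →L[ℂ] LinearMap.range A.toFun :=
    ((ContinuousLinearMap.snd ℂ E F).comp A.graph.subtypeL).codRestrict _ (by
      rintro ⟨p, hp⟩
      obtain ⟨a, h1, h2⟩ := (LinearPMap.mem_graph_iff A).1 hp
      exact ⟨a, h2⟩)
  have hf : Function.Surjective f := by
    rintro ⟨_, a, rfl⟩
    exact ⟨⟨((a : E), A a), A.mem_graph a⟩, rfl⟩
  obtain ⟨C, hC, h⟩ := f.exists_preimage_norm_le hf
  refine ⟨C, hC, fun y hy => ?_⟩
  obtain ⟨⟨p, hp⟩, h1, h2⟩ := h ⟨y, hy⟩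
  obtain ⟨a, h3, h4⟩ := (LinearPMap.mem_graph_iff A).1 hp
  have h5 : A a = y := h4.trans (congrArg Subtype.val h1)
  have h6 : ‖(a : E)‖ ≤ C * ‖(y : F)‖ := by
    rw [h3]; exact (norm_fst_le p).trans h2
  have h7 := hAB a y
  rw [h5] at h7
  have h8 : ‖(y : F)‖ * ‖(y : F)‖ ≤ ‖(a : E)‖ * ‖B y‖ := by
    rw [← inner_self_eq_norm_mul_norm (𝕜 := ℂ), h7]
    exact (RCLike.re_le_norm _).trans (norm_inner_le_norm _ _)
  rcases (norm_nonneg (y : F)).eq_or_lt with h0 | h0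
  · rw [← h0]; positivity
  · refine le_of_mul_le_mul_right (h8.trans ?_) h0
    calc _ ≤ (C * ‖(y : F)‖) * ‖B y‖ := by gcongr
      _ = _ := by ring

/-- estimate implies closed range -/
lemma aux_B (A : E →ₗ.[ℂ] F) (B : F →ₗ.[ℂ] E)
    (h1 : ∀ x z, (∀ y : B.domain, inner ℂ x (B y) = inner ℂ z (y : F)) →
      ∃ hx : x ∈ A.domain, A ⟨x, hx⟩ = z)
    (h2 : ∀ y ∈ (LinearMap.range A.toFun)ᗮ, ∃ hy : y ∈ B.domain, B ⟨y, hy⟩ = 0)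
    (C : ℝ) (hC : 0 < C)
    (h : ∀ y : B.domain, (y : F) ∈ (LinearMap.range A.toFun)ᗮᗮ → ‖(y : F)‖ ≤ C * ‖B y‖) :
    IsClosed ((LinearMap.range A.toFun : Submodule ℂ F) : Set F) := by
  suffices hs : (LinearMap.range A.toFun)ᗮᗮ ≤ LinearMap.range A.toFun by
    rw [← le_antisymm hs (Submodule.le_orthogonal_orthogonal _)]
    exact Submodule.isClosed_orthogonal _
  intro z hz
  have hb : ∀ y : B.domain, ‖inner ℂ z (y : F)‖ ≤ (‖z‖ * C) * ‖B y‖ := by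
    intro y
    let K := (LinearMap.range A.toFun)ᗮ
    have hp : K.starProjection (y : F) ∈ K := Submodule.starProjection_apply_mem _ _
    have hq : (y : F) - K.starProjection (y : F) ∈ Kᗮ :=
      Submodule.sub_starProjection_mem_orthogonal _
    obtain ⟨hy, hy0⟩ := h2 _ hp
    have e1 := h (y - ⟨_, hy⟩) hq
    rw [LinearPMap.map_sub, hy0, sub_zero] at e1
    have e2 : inner ℂ z (y : F) = inner ℂ z ((y : F) - K.starProjection (y : F)) := by
      rw [inner_sub_right, Submodule.inner_left_of_mem_orthogonal hp hz, sub_zero]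
    rw [e2, mul_assoc]
    exact (norm_inner_le_norm _ _).trans (mul_le_mul_of_nonneg_left e1 (norm_nonneg _))
  obtain ⟨s, hs⟩ := B.toFun.rangeRestrict.exists_rightInverse_of_surjective
    (LinearMap.range_rangeRestrict _)
  have hs' : ∀ r, B (s r) = (r : E) := fun r => congrArg Subtype.val (LinearMap.congr_fun hs r)
  let f0 : LinearMap.range B.toFun →ₗ[ℂ] ℂ :=
    ((innerSL ℂ z).toLinearMap.comp B.domain.subtype).comp s
  let f : StrongDual ℂ (LinearMap.range B.toFun) := f0.mkContinuous (‖z‖ * C) (by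
    intro r
    have := hb (s r)
    rw [hs'] at this
    exact this)
  obtain ⟨g, hg, -⟩ := exists_extension_norm_eq _ f
  obtain ⟨hx, hxz⟩ := h1 ((InnerProductSpace.toDual ℂ E).symm g) z (by
    intro y
    rw [InnerProductSpace.toDual_symm_apply]
    have e1 := hg ⟨B y, y, rfl⟩
    have e2 : g (B y) = inner ℂ z ((s ⟨B y, y, rfl⟩ : B.domain) : F) := e1
    rw [e2]
    have e3 := hb (s ⟨B y, y, rfl⟩ - y)
    rw [LinearPMap.map_sub, hs', sub_self, norm_zero, mul_zero] at e3
    have e4 := norm_le_zero_iff.1 e3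
    rw [Submodule.coe_sub, inner_sub_right] at e4
    exact sub_eq_zero.1 e4)
  exact ⟨⟨_, hx⟩, hxz⟩

end Aux

/-- Hörmander's Lemma 7.2, first part: for closed densely defined operators `T : H₁ → H₂` and
`S : H₂ → H₃` with `Range T ⊆ Ker S` and `H := Ker S ∩ Ker T*`, the ranges of `T` and of `S*`
are both closed iff there is `C > 0` with `‖u‖² ≤ C²(‖Su‖² + ‖T*u‖²)` for every
`u ∈ Dom S ∩ Dom T*` orthogonal to `H`. -/
theorem closed_ranges_iff_estimate
    {H₁ H₂ H₃ : Type*} [NormedAddCommGroup H₁] [InnerProductSpace ℂ H₁] [CompleteSpace H₁]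
    [NormedAddCommGroup H₂] [InnerProductSpace ℂ H₂] [CompleteSpace H₂]
    [NormedAddCommGroup H₃] [InnerProductSpace ℂ H₃] [CompleteSpace H₃]
    (T : H₁ →ₗ.[ℂ] H₂) (S : H₂ →ₗ.[ℂ] H₃)
    (hT_dense : Dense (T.domain : Set H₁)) (hT_closed : T.IsClosed)
    (hS_dense : Dense (S.domain : Set H₂)) (hS_closed : S.IsClosed)
    (hST : LinearMap.range T.toFun ≤ (LinearMap.ker S.toFun).map S.domain.subtype)
    (H : Submodule ℂ H₂)
    (hH : H = ((LinearMap.ker S.toFun).map S.domain.subtype) ⊓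
        ((LinearMap.ker T.adjoint.toFun).map T.adjoint.domain.subtype)) :
    (IsClosed ((LinearMap.range T.toFun : Submodule ℂ H₂) : Set H₂) ∧
        IsClosed ((LinearMap.range S.adjoint.toFun : Submodule ℂ H₂) : Set H₂)) ↔
      ∃ C : ℝ, 0 < C ∧ ∀ (u : H₂) (huS : u ∈ S.domain) (huT : u ∈ T.adjoint.domain),
        u ∈ Hᗮ →
          ‖u‖ ^ 2 ≤ C ^ 2 * (‖S ⟨u, huS⟩‖ ^ 2 + ‖T.adjoint ⟨u, huT⟩‖ ^ 2) := by
  have fT := LinearPMap.adjoint_isFormalAdjoint hT_dense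
  have fS := LinearPMap.adjoint_isFormalAdjoint hS_dense
  have hSz : ∀ x : T.domain, ∃ hx : T x ∈ S.domain, S ⟨T x, hx⟩ = 0 := by
    intro x
    obtain ⟨⟨a, ha⟩, h1, h2⟩ := hST ⟨x, rfl⟩
    have h3 : a = T x := h2
    subst h3
    exact ⟨ha, h1⟩
  have hH' : ∀ w (h1 : w ∈ S.domain) (h2 : w ∈ T.adjoint.domain), S ⟨w, h1⟩ = 0 →
      T.adjoint ⟨w, h2⟩ = 0 → w ∈ H := by
    intro w h1 h2 h3 h4
    rw [hH]
    exact ⟨⟨⟨w, h1⟩, h3, rfl⟩, ⟨⟨w, h2⟩, h4, rfl⟩⟩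
  have hH'' : ∀ w ∈ H, ∃ (h1 : w ∈ S.domain) (h2 : w ∈ T.adjoint.domain), S ⟨w, h1⟩ = 0 ∧
      T.adjoint ⟨w, h2⟩ = 0 := by
    intro w hw
    rw [hH] at hw
    obtain ⟨⟨⟨a, ha⟩, h1, h2⟩, ⟨⟨b, hb⟩, h3, h4⟩⟩ := hw
    have h5 : a = w := h2
    have h6 : b = w := h4
    subst h5
    subst h6
    exact ⟨ha, hb, h1, h3⟩
  have kT : ∀ y ∈ (LinearMap.range T.toFun)ᗮ,
      ∃ hy : y ∈ T.adjoint.domain, T.adjoint ⟨y, hy⟩ = 0 := by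
    intro y hy
    refine aux_adj_mem T hT_dense y 0 fun x => ?_
    rw [inner_zero_left]
    exact (Submodule.inner_left_of_mem_orthogonal (LinearMap.mem_range_self T.toFun x) hy).symm
  have kS : ∀ y ∈ (LinearMap.range S.adjoint.toFun)ᗮ,
      ∃ hy : y ∈ S.domain, S ⟨y, hy⟩ = 0 := by
    intro y hy
    refine aux_mem S hS_dense hS_closed y 0 fun x => ?_
    rw [inner_zero_left]
    exact Submodule.inner_left_of_mem_orthogonal (LinearMap.mem_range_self S.adjoint.toFun x) hy
  have kT' : ∀ y (hy : y ∈ T.adjoint.domain), T.adjoint ⟨y, hy⟩ = 0 →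
      y ∈ (LinearMap.range T.toFun)ᗮ := by
    rintro y hy h0
    rw [Submodule.mem_orthogonal']
    rintro _ ⟨x, rfl⟩
    have := fT ⟨y, hy⟩ x
    rw [h0, inner_zero_left] at this
    exact this.symm
  have kS' : ∀ y (hy : y ∈ S.domain), S ⟨y, hy⟩ = 0 →
      y ∈ (LinearMap.range S.adjoint.toFun)ᗮ := by
    rintro y hy h0
    rw [Submodule.mem_orthogonal]
    rintro _ ⟨x, rfl⟩
    have := fS x ⟨y, hy⟩
    rw [h0, inner_zero_right] at this
    exact this
  have hTS : LinearMap.range T.toFun ≤ (LinearMap.range S.adjoint.toFun)ᗮ := by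
    rintro _ ⟨x, rfl⟩
    obtain ⟨h1, h2⟩ := hSz x
    exact kS' _ h1 h2
  have hST' : (LinearMap.range S.adjoint.toFun)ᗮᗮ ≤ (LinearMap.range T.toFun)ᗮ :=
    Submodule.orthogonal_le hTS
  have hTS' : (LinearMap.range T.toFun)ᗮᗮ ≤ (LinearMap.range S.adjoint.toFun)ᗮ := by
    have := Submodule.orthogonal_le hST'
    rwa [Submodule.triorthogonal_eq_orthogonal] at this
  constructor
  · rintro ⟨cT, cS⟩
    obtain ⟨C1, hC1, e1⟩ := aux_A T T.adjoint hT_closed fT.symm cT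
    obtain ⟨C2, hC2, e2⟩ := aux_A S.adjoint S (LinearPMap.adjoint_isClosed hS_dense) fS cS
    refine ⟨C1 + C2, by positivity, fun u huS huT hu => ?_⟩
    haveI : CompleteSpace (LinearMap.range T.toFun) := cT.completeSpace_coe
    haveI : CompleteSpace (LinearMap.range S.adjoint.toFun) := cS.completeSpace_coe
    obtain ⟨u1, hu1, u2, hu2, h12⟩ :=
      (LinearMap.range T.toFun).exists_add_mem_mem_orthogonal u
    obtain ⟨v, hv, w, hw, hvw⟩ :=
      (LinearMap.range S.adjoint.toFun).exists_add_mem_mem_orthogonal u2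
    have hvT := hST' (Submodule.le_orthogonal_orthogonal _ hv)
    have hwT : w ∈ (LinearMap.range T.toFun)ᗮ := by
      have : w = u2 - v := by rw [hvw]; abel
      rw [this]; exact Submodule.sub_mem _ hu2 hvT
    obtain ⟨hwS, hwS0⟩ := kS w hw
    obtain ⟨hwT1, hwT0⟩ := kT w hwT
    have hwH := hH' w hwS hwT1 hwS0 hwT0
    have i1 : inner ℂ w u = 0 := Submodule.inner_right_of_mem_orthogonal hwH hu
    have i2 : inner ℂ w u1 = 0 := Submodule.inner_left_of_mem_orthogonal hu1 hwT
    have i3 : inner ℂ w v = 0 := Submodule.inner_left_of_mem_orthogonal hv hw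
    have hw0 : w = 0 := by
      rw [h12, hvw, inner_add_right, inner_add_right, i2, i3, zero_add, zero_add] at i1
      exact inner_self_eq_zero.1 i1
    rw [hw0, add_zero] at hvw
    subst hvw
    obtain ⟨hu1S, hu1S0⟩ := kS u1 (hTS hu1)
    obtain ⟨hvT1, hvT0⟩ := kT u2 hvT
    have hvS : u2 ∈ S.domain := by
      have : u2 = u - u1 := by rw [h12]; abel
      rw [this]; exact Submodule.sub_mem _ huS hu1S
    have hu1T : u1 ∈ T.adjoint.domain := by
      have : u1 = u - u2 := by rw [h12]; abel
      rw [this]; exact Submodule.sub_mem _ huT hvT1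
    have s1 : S ⟨u, huS⟩ = S ⟨u2, hvS⟩ := by
      have : (⟨u, huS⟩ : S.domain) = ⟨u1, hu1S⟩ + ⟨u2, hvS⟩ := Subtype.ext h12
      rw [this, LinearPMap.map_add, hu1S0, zero_add]
    have s2 : T.adjoint ⟨u, huT⟩ = T.adjoint ⟨u1, hu1T⟩ := by
      have : (⟨u, huT⟩ : T.adjoint.domain) = ⟨u1, hu1T⟩ + ⟨u2, hvT1⟩ := Subtype.ext h12
      rw [this, LinearPMap.map_add, hvT0, add_zero]
    have b1 : ‖u1‖ ≤ C1 * ‖T.adjoint ⟨u1, hu1T⟩‖ := e1 ⟨u1, hu1T⟩ hu1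
    have b2 : ‖u2‖ ≤ C2 * ‖S ⟨u2, hvS⟩‖ := e2 ⟨u2, hvS⟩ hv
    have pyth : ‖u‖ ^ 2 = ‖u1‖ ^ 2 + ‖u2‖ ^ 2 := by
      have := norm_add_sq_eq_norm_sq_add_norm_sq_of_inner_eq_zero (𝕜 := ℂ) u1 u2
        (Submodule.inner_right_of_mem_orthogonal hu1 hu2)
      rw [h12, pow_two, pow_two, pow_two]; exact this
    rw [s1, s2, pyth]
    calc ‖u1‖ ^ 2 + ‖u2‖ ^ 2
        ≤ (C1 * ‖T.adjoint ⟨u1, hu1T⟩‖) ^ 2 + (C2 * ‖S ⟨u2, hvS⟩‖) ^ 2 := by gcongr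
      _ ≤ ((C1 + C2) * ‖T.adjoint ⟨u1, hu1T⟩‖) ^ 2 + ((C1 + C2) * ‖S ⟨u2, hvS⟩‖) ^ 2 := by
        gcongr <;> linarith
      _ = _ := by ring
  · rintro ⟨C, hC, h⟩
    constructor
    · refine aux_B T T.adjoint (aux_mem T hT_dense hT_closed) kT C hC fun y hy => ?_
      obtain ⟨y, hyT⟩ := y
      obtain ⟨hyS, hyS0⟩ := kS y (hTS' hy)
      have hyH : y ∈ Hᗮ := by
        rw [Submodule.mem_orthogonal]
        intro w hw
        obtain ⟨h1, h2, h3, h4⟩ := hH'' w hw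
        exact Submodule.inner_right_of_mem_orthogonal (kT' w h2 h4) hy
      have := h y hyS hyT hyH
      rw [hyS0, norm_zero, zero_pow two_ne_zero, zero_add, ← mul_pow] at this
      exact (pow_le_pow_iff_left₀ (norm_nonneg _) (by positivity) two_ne_zero).1 this
    · refine aux_B S.adjoint S (fun x z hxz => aux_adj_mem S hS_dense x z
        fun y => (hxz y).symm) kS C hC fun y hy => ?_
      obtain ⟨y, hyS⟩ := y
      obtain ⟨hyT, hyT0⟩ := kT y (hST' hy)
      have hyH : y ∈ Hᗮ := by
        rw [Submodule.mem_orthogonal]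
        intro w hw
        obtain ⟨h1, h2, h3, h4⟩ := hH'' w hw
        exact Submodule.inner_right_of_mem_orthogonal (kS' w h1 h3) hy
      have := h y hyS hyT hyH
      rw [hyT0, norm_zero, zero_pow two_ne_zero, add_zero, ← mul_pow] at this
      exact (pow_le_pow_iff_left₀ (norm_nonneg _) (by positivity) two_ne_zero).1 this
end

section
/- Let H₁, H₂, H₃ be complex Hilbert spaces, let T : H₁ → H₂ and S : H₂ → H₃ be closed, densely defined linear operators with Range T ⊆ Ker S. Then there exists a constant C > 0 such that ‖u‖² ≤ C²(‖Su‖² + ‖T*u‖²) for every u ∈ Dom S ∩ Dom T* if and only if Range S* = Ker T* and Range T = Ker S. -/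
theorem aux_mem_ker {E F : Type*} [AddCommGroup E] [Module ℂ E] [AddCommGroup F] [Module ℂ F]
    (P : E →ₗ.[ℂ] F) (u : E) :
    u ∈ (LinearMap.ker P.toFun).map P.domain.subtype ↔ ∃ h : u ∈ P.domain, P ⟨u, h⟩ = 0 := by
  constructor
  · rintro ⟨⟨x, hx⟩, h0, rfl⟩
    exact ⟨hx, h0⟩
  · rintro ⟨h, h0⟩
    exact ⟨⟨u, h⟩, h0, rfl⟩

theorem aux_mem_range {E F : Type*} [AddCommGroup E] [Module ℂ E] [AddCommGroup F] [Module ℂ F]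
    (P : E →ₗ.[ℂ] F) (w : F) :
    w ∈ LinearMap.range P.toFun ↔ ∃ u : P.domain, P u = w := Iff.rfl

theorem aux_ker_closed {E F : Type*} [NormedAddCommGroup E] [NormedSpace ℂ E]
    [NormedAddCommGroup F] [NormedSpace ℂ F] (P : E →ₗ.[ℂ] F) (hP : P.IsClosed) :
    IsClosed (((LinearMap.ker P.toFun).map P.domain.subtype : Submodule ℂ E) : Set E) := by
  have : (((LinearMap.ker P.toFun).map P.domain.subtype : Submodule ℂ E) : Set E)
      = (fun u : E => (u, (0 : F))) ⁻¹' (P.graph : Set (E × F)) := by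
    ext u
    rw [SetLike.mem_coe, aux_mem_ker, Set.mem_preimage, SetLike.mem_coe, LinearPMap.mem_graph_iff]
    constructor
    · rintro ⟨h, h0⟩
      exact ⟨⟨u, h⟩, rfl, h0⟩
    · rintro ⟨⟨y, hy⟩, h1, h2⟩
      obtain rfl : y = u := h1
      exact ⟨hy, h2⟩
  rw [this]
  exact IsClosed.preimage (by fun_prop) hP

/-- Riesz representation step. -/
theorem aux_riesz {E F : Type*} [NormedAddCommGroup E] [InnerProductSpace ℂ E]
    [NormedAddCommGroup F] [InnerProductSpace ℂ F] [CompleteSpace F] (P : E →ₗ.[ℂ] F)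
    (f : E) (C : ℝ) (h : ∀ u : P.domain, ‖inner ℂ f (u : E)‖ ≤ C * ‖P u‖) :
    ∃ v : F, ∀ u : P.domain, inner ℂ v (P u) = inner ℂ f (u : E) := by
  let g : P.domain →ₗ[ℂ] ℂ := (innerSL ℂ f).toLinearMap.comp P.domain.subtype
  have hg : ∀ u, g u = inner ℂ f (u : E) := fun u => rfl
  have hker : LinearMap.ker P.toFun.rangeRestrict ≤ LinearMap.ker g := by
    intro u hu
    have hu' : P u = 0 := congrArg Subtype.val (LinearMap.mem_ker.1 hu)
    have := h u
    rw [hu', norm_zero, mul_zero] at this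
    exact LinearMap.mem_ker.2 (norm_le_zero_iff.1 this)
  obtain ⟨k, hk⟩ : ∃ k : LinearMap.range P.toFun →ₗ[ℂ] ℂ, k ∘ₗ P.toFun.rangeRestrict = g := by
    obtain ⟨σ, hσ⟩ := P.toFun.rangeRestrict.exists_rightInverse_of_surjective
      P.toFun.range_rangeRestrict
    refine ⟨g ∘ₗ σ, LinearMap.ext fun u => ?_⟩
    have h1 : σ (P.toFun.rangeRestrict u) - u ∈ LinearMap.ker P.toFun.rangeRestrict := by
      rw [LinearMap.mem_ker, map_sub, sub_eq_zero]
      exact LinearMap.congr_fun hσ _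
    have h2 := LinearMap.mem_ker.1 (hker h1)
    rw [map_sub, sub_eq_zero] at h2
    exact h2
  have hk' : ∀ u : P.domain, k ⟨P u, ⟨u, rfl⟩⟩ = inner ℂ f (u : E) := fun u =>
    LinearMap.congr_fun hk u
  let K : StrongDual ℂ (LinearMap.range P.toFun) := k.mkContinuous C (by
    rintro ⟨_, u, rfl⟩
    have := h u
    rw [← hk'] at this
    exact this)
  obtain ⟨G, hG, -⟩ := exists_extension_norm_eq _ K
  refine ⟨(InnerProductSpace.toDual ℂ F).symm G, fun u => ?_⟩
  rw [InnerProductSpace.toDual_symm_apply, ← hk']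
  exact hG ⟨P u, ⟨u, rfl⟩⟩

theorem aux_adj {E F : Type*} [NormedAddCommGroup E] [InnerProductSpace ℂ E] [CompleteSpace E]
    [NormedAddCommGroup F] [InnerProductSpace ℂ F] (P : E →ₗ.[ℂ] F)
    (hd : Dense (P.domain : Set E)) (v : F) (f : E)
    (h : ∀ u : P.domain, inner ℂ v (P u) = inner ℂ f (u : E)) :
    ∃ hv : v ∈ P.adjoint.domain, P.adjoint ⟨v, hv⟩ = f := by
  have hv : v ∈ P.adjoint.domain :=
    LinearPMap.mem_adjoint_domain_of_exists _ ⟨f, fun x => (h x).symm⟩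
  exact ⟨hv, LinearPMap.adjoint_apply_eq hd _ fun x => (h x).symm⟩

/-- The closed operator is its own double adjoint. -/
theorem aux_double {E F : Type*} [NormedAddCommGroup E] [InnerProductSpace ℂ E] [CompleteSpace E]
    [NormedAddCommGroup F] [InnerProductSpace ℂ F] [CompleteSpace F] (P : E →ₗ.[ℂ] F)
    (hd : Dense (P.domain : Set E)) (hc : P.IsClosed) (v : E) (w : F)
    (h : ∀ u : P.adjoint.domain, inner ℂ v (P.adjoint u) = inner ℂ w (u : F)) :
    ∃ x : P.domain, P x = w := by
  let G : Submodule ℂ (WithLp 2 (E × F)) :=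
    P.graph.comap (WithLp.linearEquiv 2 ℂ (E × F)).toLinearMap
  have hGc : IsClosed (G : Set (WithLp 2 (E × F))) :=
    IsClosed.preimage (WithLp.prod_continuous_ofLp 2 E F) hc
  have : CompleteSpace G := hGc.completeSpace_coe
  have key : WithLp.toLp 2 (v, w) ∈ Gᗮᗮ := by
    rw [Submodule.mem_orthogonal']
    intro y hy
    rw [Submodule.mem_orthogonal'] at hy
    -- y = (a, b) ⊥ graph means b ∈ dom P*, P* b = -a
    obtain ⟨hb, hPb⟩ := aux_adj P hd y.snd (-y.fst) (by
      intro u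
      have := hy (WithLp.toLp 2 ((u : E), P u)) (P.mem_graph u)
      rw [WithLp.prod_inner_apply] at this
      simp only [] at this
      rw [inner_neg_left]
      exact eq_neg_of_add_eq_zero_right this)
    have := h ⟨y.snd, hb⟩
    rw [hPb, inner_neg_right] at this
    rw [WithLp.prod_inner_apply]
    change inner ℂ v y.fst + inner ℂ w y.snd = 0
    change _ = inner ℂ w y.snd at this
    rw [← this, add_neg_cancel]
  rw [Submodule.orthogonal_orthogonal] at key
  have key' : (v, w) ∈ P.graph := key
  obtain ⟨x, -, hx⟩ := (LinearPMap.mem_graph_iff _).1 key'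
  exact ⟨x, hx⟩

/-- Hörmander's Lemma 7.2, second part: for closed densely defined operators `T : H₁ → H₂` and
`S : H₂ → H₃` with `Range T ⊆ Ker S`, there is `C > 0` with
`‖u‖² ≤ C²(‖Su‖² + ‖T*u‖²)` for every `u ∈ Dom S ∩ Dom T*` iff
`Range S* = Ker T*` and `Range T = Ker S`. -/
theorem estimate_iff_range_eq_ker
    {H₁ H₂ H₃ : Type*} [NormedAddCommGroup H₁] [InnerProductSpace ℂ H₁] [CompleteSpace H₁]
    [NormedAddCommGroup H₂] [InnerProductSpace ℂ H₂] [CompleteSpace H₂]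
    [NormedAddCommGroup H₃] [InnerProductSpace ℂ H₃] [CompleteSpace H₃]
    (T : H₁ →ₗ.[ℂ] H₂) (S : H₂ →ₗ.[ℂ] H₃)
    (hT_dense : Dense (T.domain : Set H₁)) (hT_closed : T.IsClosed)
    (hS_dense : Dense (S.domain : Set H₂)) (hS_closed : S.IsClosed)
    (hST : LinearMap.range T.toFun ≤ (LinearMap.ker S.toFun).map S.domain.subtype) :
    (∃ C : ℝ, 0 < C ∧ ∀ (u : H₂) (huS : u ∈ S.domain) (huT : u ∈ T.adjoint.domain),
        ‖u‖ ^ 2 ≤ C ^ 2 * (‖S ⟨u, huS⟩‖ ^ 2 + ‖T.adjoint ⟨u, huT⟩‖ ^ 2)) ↔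
      (LinearMap.range S.adjoint.toFun =
          (LinearMap.ker T.adjoint.toFun).map T.adjoint.domain.subtype ∧
        LinearMap.range T.toFun = (LinearMap.ker S.toFun).map S.domain.subtype) := by

  set N : Submodule ℂ H₂ := (LinearMap.ker S.toFun).map S.domain.subtype with hN
  have hNc : IsClosed (N : Set H₂) := aux_ker_closed S hS_closed
  have : CompleteSpace N := hNc.completeSpace_coe
  have hTa := LinearPMap.adjoint_isFormalAdjoint hT_dense
  have hSa := LinearPMap.adjoint_isFormalAdjoint hS_dense
  have hperp : ∀ u ∈ Nᗮ, ∃ h : u ∈ T.adjoint.domain, T.adjoint ⟨u, h⟩ = 0 := by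
    intro u hu
    refine aux_adj T hT_dense u 0 fun x => ?_
    rw [inner_zero_left]
    exact (Submodule.mem_orthogonal' _ _).1 hu _ (hST ⟨x, rfl⟩)
  have hdec : ∀ u : H₂, ∃ a ∈ N, ∃ b ∈ Nᗮ, u = a + b := fun u =>
    ⟨_, N.starProjection_apply_mem u, u - N.starProjection u,
      N.sub_starProjection_mem_orthogonal u, by abel⟩
  constructor
  · rintro ⟨C, hC, hest⟩
    have hest' : ∀ (u : H₂) (huS : u ∈ S.domain) (huT : u ∈ T.adjoint.domain) (r : ℝ), 0 ≤ r →
        ‖S ⟨u, huS⟩‖ ^ 2 + ‖T.adjoint ⟨u, huT⟩‖ ^ 2 = r ^ 2 → ‖u‖ ≤ C * r := by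
      intro u huS huT r hr h
      have := hest u huS huT
      rw [h, ← mul_pow] at this
      exact le_of_sq_le_sq this (by positivity)
    have hTS : LinearMap.range T.toFun = N := by
      refine le_antisymm hST fun w hw => ?_
      obtain ⟨v, hv⟩ := aux_riesz T.adjoint w (‖w‖ * C) (by
        rintro ⟨u, hu⟩
        obtain ⟨a, ha, b, hb, rfl⟩ := hdec u
        obtain ⟨hbd, hb0⟩ := hperp b hb
        obtain ⟨haS, haS0⟩ := (aux_mem_ker S a).1 ha
        have had : a ∈ T.adjoint.domain := by
          have := T.adjoint.domain.sub_mem hu hbd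
          rwa [add_sub_cancel_right] at this
        have hsum : T.adjoint ⟨a + b, hu⟩ = T.adjoint ⟨a, had⟩ := by
          have := T.adjoint.map_add ⟨a, had⟩ ⟨b, hbd⟩
          rw [hb0, add_zero] at this
          exact this
        have h1 := hest' a haS had ‖T.adjoint ⟨a, had⟩‖ (norm_nonneg _) (by
          rw [haS0, norm_zero]; ring)
        change ‖inner ℂ w (a + b)‖ ≤ _
        rw [hsum, inner_add_right, (Submodule.mem_orthogonal _ _).1 hb w hw, add_zero, mul_assoc]
        exact (norm_inner_le_norm _ _).trans (by gcongr))
      exact aux_double T hT_dense hT_closed v w hv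
    refine ⟨le_antisymm ?_ ?_, hTS⟩
    · rintro _ ⟨g, rfl⟩
      rw [aux_mem_ker]
      apply hperp
      rw [Submodule.mem_orthogonal']
      intro n hn
      obtain ⟨hnS, hn0⟩ := (aux_mem_ker S n).1 hn
      have := hSa g ⟨n, hnS⟩
      rw [hn0, inner_zero_right] at this
      exact this
    · intro f hf
      obtain ⟨hfd, hf0⟩ := (aux_mem_ker _ _).1 hf
      have hfN : ∀ n ∈ N, inner ℂ f n = 0 := by
        intro n hn
        rw [← hTS] at hn
        obtain ⟨x, rfl⟩ := hn
        have := hTa ⟨f, hfd⟩ x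
        rw [hf0, inner_zero_left] at this
        exact this.symm
      obtain ⟨v, hv⟩ := aux_riesz S f (‖f‖ * C) (by
        rintro ⟨u, hu⟩
        obtain ⟨a, ha, b, hb, rfl⟩ := hdec u
        obtain ⟨hbd, hb0⟩ := hperp b hb
        obtain ⟨haS, haS0⟩ := (aux_mem_ker S a).1 ha
        have hbS : b ∈ S.domain := by
          have := S.domain.sub_mem hu haS
          rwa [add_sub_cancel_left] at this
        have hsum : S ⟨a + b, hu⟩ = S ⟨b, hbS⟩ := by
          have := S.map_add ⟨a, haS⟩ ⟨b, hbS⟩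
          rw [haS0, zero_add] at this
          exact this
        have h1 := hest' b hbS hbd ‖S ⟨b, hbS⟩‖ (norm_nonneg _) (by
          rw [hb0, norm_zero]; ring)
        change ‖inner ℂ f (a + b)‖ ≤ _
        rw [hsum, inner_add_right, hfN a ha, zero_add, mul_assoc]
        exact (norm_inner_le_norm _ _).trans (by gcongr))
      obtain ⟨hvd, hv'⟩ := aux_adj S hS_dense v f hv
      exact ⟨⟨v, hvd⟩, hv'⟩
  · rintro ⟨hR, hTS⟩
    let I := {p : H₂ × ℝ // 0 < p.2 ∧ ∃ (huS : p.1 ∈ S.domain) (huT : p.1 ∈ T.adjoint.domain),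
      ‖S ⟨p.1, huS⟩‖ ≤ p.2 ∧ ‖T.adjoint ⟨p.1, huT⟩‖ ≤ p.2}
    let Φ : I → StrongDual ℂ H₂ := fun i => innerSL ℂ (((i.1.2⁻¹ : ℝ) : ℂ) • i.1.1)
    obtain ⟨M, hM⟩ := banach_steinhaus (g := Φ) (by
      intro w
      obtain ⟨a, ha, b, hb, rfl⟩ := hdec w
      rw [← hTS] at ha
      obtain ⟨x, rfl⟩ := ha
      have hb' := (aux_mem_ker _ _).2 (hperp b hb)
      rw [← hR] at hb'
      obtain ⟨g, rfl⟩ := hb'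
      refine ⟨‖(x : H₁)‖ + ‖(g : H₃)‖, ?_⟩
      rintro ⟨⟨u, r⟩, hr, huS, huT, h1, h2⟩
      change 0 < r at hr
      change ‖S ⟨u, huS⟩‖ ≤ r at h1
      change ‖T.adjoint ⟨u, huT⟩‖ ≤ r at h2
      change ‖inner ℂ (((r⁻¹ : ℝ) : ℂ) • u) (T x + S.adjoint g)‖ ≤ _
      have e1 : inner ℂ u (T x) = inner ℂ (T.adjoint ⟨u, huT⟩) (x : H₁) := (hTa ⟨u, huT⟩ x).symm
      have e2 : inner ℂ u (S.adjoint g) = inner ℂ (S ⟨u, huS⟩) (g : H₃) :=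
        (hSa.symm ⟨u, huS⟩ g).symm
      rw [inner_smul_left, inner_add_right, e1, e2, norm_mul, RCLike.norm_conj,
        Complex.norm_real, norm_inv, Real.norm_of_nonneg hr.le, inv_mul_le_iff₀ hr]
      refine (norm_add_le _ _).trans ?_
      rw [mul_add]
      refine add_le_add ((norm_inner_le_norm _ _).trans ?_) ((norm_inner_le_norm _ _).trans ?_)
      · gcongr
      · gcongr)
    have hM0 : 0 ≤ M := (norm_nonneg _).trans (hM ⟨(0, 1), one_pos, S.domain.zero_mem,
      T.adjoint.domain.zero_mem, by
        have : S ⟨0, S.domain.zero_mem⟩ = 0 := S.map_zero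
        simp [this], by
        have : T.adjoint ⟨0, T.adjoint.domain.zero_mem⟩ = 0 := T.adjoint.map_zero
        simp [this]⟩)
    refine ⟨M + 1, by positivity, fun u huS huT => ?_⟩
    set s := ‖S ⟨u, huS⟩‖ with hs
    set t := ‖T.adjoint ⟨u, huT⟩‖ with ht
    have hs0 : 0 ≤ s := norm_nonneg _
    have ht0 : 0 ≤ t := norm_nonneg _
    set q := Real.sqrt (s ^ 2 + t ^ 2) with hq
    have hq2 : q ^ 2 = s ^ 2 + t ^ 2 := Real.sq_sqrt (by positivity)
    have hq0 : 0 ≤ q := Real.sqrt_nonneg _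
    have hsq : s ≤ q := Real.le_sqrt_of_sq_le (by nlinarith)
    have htq : t ≤ q := Real.le_sqrt_of_sq_le (by nlinarith)
    have hb : ∀ r, q < r → ‖u‖ ≤ (M + 1) * r := by
      intro r hr
      have hr0 : 0 < r := hq0.trans_lt hr
      have := hM ⟨(u, r), hr0, huS, huT, hsq.trans hr.le, htq.trans hr.le⟩
      change ‖innerSL ℂ (((r⁻¹ : ℝ) : ℂ) • u)‖ ≤ M at this
      rw [innerSL_apply_norm, norm_smul, Complex.norm_real, norm_inv, Real.norm_of_nonneg hr0.le,
        inv_mul_le_iff₀ hr0] at this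
      nlinarith
    have hfin : ‖u‖ ≤ (M + 1) * q := by
      have hM1 : 0 < M + 1 := by positivity
      rw [mul_comm, ← div_le_iff₀ hM1]
      refine le_of_forall_gt_imp_ge_of_dense fun r hr => ?_
      rw [div_le_iff₀ hM1, mul_comm]
      exact hb r hr
    rw [← hq2, ← mul_pow]
    gcongr
end

section
/- Let H₁, H₂, H₃ be complex Hilbert spaces, let T : H₁ → H₂ and S : H₂ → H₃ be closed, densely defined linear operators with Range T ⊆ Ker S, and set H := Ker S ∩ Ker T*. Suppose there is a constant c > 0 such that ‖Ta‖² ≥ c‖a‖² for every a ∈ Dom T orthogonal to Ker T, and ‖S*b‖² ≥ c‖b‖² for every b ∈ Dom S* orthogonal to Ker S*. Then every u ∈ Dom S ∩ Dom T* that is orthogonal to H satisfies ‖Su‖² + ‖T*u‖² ≥ c‖u‖². -/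
namespace EstGaps

lemma mem_kerMap {E F : Type*} [NormedAddCommGroup E] [InnerProductSpace ℂ E]
    [NormedAddCommGroup F] [InnerProductSpace ℂ F] (A : E →ₗ.[ℂ] F) (x : E) :
    x ∈ (LinearMap.ker A.toFun).map A.domain.subtype ↔ ∃ h : x ∈ A.domain, A ⟨x, h⟩ = 0 := by
  constructor
  · rintro ⟨y, hy, rfl⟩
    exact ⟨y.2, hy⟩
  · rintro ⟨h, h0⟩
    exact ⟨⟨x, h⟩, h0, rfl⟩

lemma mem_kerMap_graph {E F : Type*} [NormedAddCommGroup E] [InnerProductSpace ℂ E]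
    [NormedAddCommGroup F] [InnerProductSpace ℂ F] (A : E →ₗ.[ℂ] F) (x : E) :
    x ∈ (LinearMap.ker A.toFun).map A.domain.subtype ↔ (x, (0 : F)) ∈ A.graph := by
  rw [mem_kerMap, LinearPMap.mem_graph_iff]
  constructor
  · rintro ⟨h, h0⟩
    exact ⟨⟨x, h⟩, rfl, h0⟩
  · rintro ⟨y, hy, h0⟩
    simp only at hy h0
    subst hy
    exact ⟨y.2, h0⟩

lemma isClosed_kerMap {E F : Type*} [NormedAddCommGroup E] [InnerProductSpace ℂ E]
    [NormedAddCommGroup F] [InnerProductSpace ℂ F] (A : E →ₗ.[ℂ] F) (hA : A.IsClosed) :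
    IsClosed (((LinearMap.ker A.toFun).map A.domain.subtype : Submodule ℂ E) : Set E) := by
  have h : (((LinearMap.ker A.toFun).map A.domain.subtype : Submodule ℂ E) : Set E)
      = (fun x : E => (x, (0 : F))) ⁻¹' (A.graph : Set (E × F)) := by
    ext x
    exact mem_kerMap_graph A x
  rw [h]
  exact IsClosed.preimage (by fun_prop) hA

lemma key {E F : Type*} [NormedAddCommGroup E] [InnerProductSpace ℂ E] [CompleteSpace E]
    [NormedAddCommGroup F] [InnerProductSpace ℂ F]
    (A : E →ₗ.[ℂ] F) (hA : A.IsClosed) (c : ℝ) (hc : 0 < c)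
    (gap : ∀ a : A.domain, (a : E) ∈ ((LinearMap.ker A.toFun).map A.domain.subtype)ᗮ →
        c * ‖(a : E)‖ ^ 2 ≤ ‖A a‖ ^ 2)
    (v : F) (w : E) (hvw : ∀ a : A.domain, inner ℂ w (a : E) = inner ℂ v (A a))
    (hv : v ∈ (LinearMap.range A.toFun).topologicalClosure) :
    c * ‖v‖ ^ 2 ≤ ‖w‖ ^ 2 := by
  set K := (LinearMap.ker A.toFun).map A.domain.subtype with hK
  have hKc : IsClosed (K : Set E) := isClosed_kerMap A hA
  haveI : CompleteSpace K := hKc.completeSpace_coe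
  have h1 : ∀ y ∈ LinearMap.range A.toFun, √c * ‖inner ℂ v y‖ ≤ ‖w‖ * ‖y‖ := by
    rintro _ ⟨a, rfl⟩
    change √c * ‖inner ℂ v (A a)‖ ≤ ‖w‖ * ‖A a‖
    obtain ⟨hp, hp0⟩ := (mem_kerMap A _).1 (K.starProjection_apply_mem (a : E))
    set b : A.domain := a - ⟨_, hp⟩ with hb
    have hAb : A b = A a := by rw [hb, LinearPMap.map_sub, hp0, sub_zero]
    have hbo : (b : E) ∈ Kᗮ := K.sub_starProjection_mem_orthogonal (a : E)
    have hg := gap b hbo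
    rw [← hAb, ← hvw b]
    have h2 : √c * ‖(b : E)‖ ≤ ‖A b‖ := by
      refine (sq_le_sq₀ (by positivity) (norm_nonneg _)).1 ?_
      rwa [mul_pow, Real.sq_sqrt hc.le]
    have h3 := norm_inner_le_norm (𝕜 := ℂ) w (b : E)
    calc √c * ‖inner ℂ w (b : E)‖ ≤ √c * (‖w‖ * ‖(b : E)‖) := by gcongr
      _ = ‖w‖ * (√c * ‖(b : E)‖) := by ring
      _ ≤ _ := by gcongr
  have h2 : √c * ‖inner ℂ v v‖ ≤ ‖w‖ * ‖v‖ := by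
    have hcl : IsClosed {y : F | √c * ‖inner ℂ v y‖ ≤ ‖w‖ * ‖y‖} :=
      isClosed_le (by fun_prop) (by fun_prop)
    exact closure_minimal (s := (LinearMap.range A.toFun : Set F)) h1 hcl hv
  have h3 : ‖inner ℂ v v‖ = ‖v‖ * ‖v‖ := by
    rw [inner_self_eq_norm_sq_to_K]; simp [sq]
  rw [h3] at h2
  have h4 : √c * ‖v‖ ≤ ‖w‖ := by
    rcases (norm_nonneg v).eq_or_lt with h | h
    · rw [← h]; simp
    · exact le_of_mul_le_mul_right (by linarith) h
  calc c * ‖v‖ ^ 2 = (√c * ‖v‖) ^ 2 := by rw [mul_pow, Real.sq_sqrt hc.le]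
    _ ≤ _ := by gcongr

lemma range_orth_adjoint {E F : Type*} [NormedAddCommGroup E] [InnerProductSpace ℂ E]
    [CompleteSpace E] [NormedAddCommGroup F] [InnerProductSpace ℂ F]
    (A : E →ₗ.[ℂ] F) (hA : Dense (A.domain : Set E)) (w : F)
    (hw : ∀ a : A.domain, inner ℂ w (A a) = 0) :
    ∃ h : w ∈ A.adjoint.domain, A.adjoint ⟨w, h⟩ = 0 := by
  have h : w ∈ A.adjoint.domain :=
    LinearPMap.mem_adjoint_domain_of_exists w ⟨0, fun x => by rw [hw x, inner_zero_left]⟩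
  exact ⟨h, LinearPMap.adjoint_apply_eq hA _ fun x => by rw [hw x, inner_zero_left]⟩

lemma adjoint_range_orth {E F : Type*} [NormedAddCommGroup E] [InnerProductSpace ℂ E]
    [CompleteSpace E] [NormedAddCommGroup F] [InnerProductSpace ℂ F] [CompleteSpace F]
    (A : E →ₗ.[ℂ] F) (hA : Dense (A.domain : Set E)) (hc : A.IsClosed) (w : E)
    (hw : ∀ b : A.adjoint.domain, inner ℂ (A.adjoint b) w = 0) :
    w ∈ (LinearMap.ker A.toFun).map A.domain.subtype := by
  rw [mem_kerMap_graph]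
  let G : Submodule ℂ (WithLp 2 (E × F)) :=
    A.graph.comap (WithLp.linearEquiv 2 ℂ (E × F)).toLinearMap
  have hG : IsClosed (G : Set (WithLp 2 (E × F))) :=
    IsClosed.preimage (WithLp.prod_continuous_ofLp 2 E F) hc
  have hGG : Gᗮᗮ = G := by
    rw [Submodule.orthogonal_orthogonal_eq_closure, hG.submodule_topologicalClosure_eq]
  suffices h : WithLp.toLp 2 (w, (0 : F)) ∈ G from h
  rw [← hGG, Submodule.mem_orthogonal]
  intro z hz
  have hz' : ∀ x : A.domain, inner ℂ z.fst (x : E) = inner ℂ (-z.snd) (A x) := by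
    intro x
    have hm : WithLp.toLp 2 ((x : E), A x) ∈ G := A.mem_graph x
    have := (Submodule.mem_orthogonal' _ _).1 hz _ hm
    simp only [WithLp.prod_inner_apply, ] at this
    rw [inner_neg_left]
    exact eq_neg_of_add_eq_zero_left this
  have hd : -z.snd ∈ A.adjoint.domain :=
    LinearPMap.mem_adjoint_domain_of_exists _ ⟨z.fst, hz'⟩
  have he : A.adjoint ⟨_, hd⟩ = z.fst := LinearPMap.adjoint_apply_eq hA _ hz'
  have := hw ⟨_, hd⟩
  rw [he] at this
  simp only [WithLp.prod_inner_apply]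
  simpa using this

end EstGaps

/-- From spectral gaps for `T` and `S*` to the basic estimate: if `‖Ta‖² ≥ c‖a‖²` for all
`a ∈ Dom T ⊥ Ker T` and `‖S*b‖² ≥ c‖b‖²` for all `b ∈ Dom S* ⊥ Ker S*`, then every
`u ∈ Dom S ∩ Dom T*` orthogonal to `H := Ker S ∩ Ker T*` satisfies
`‖Su‖² + ‖T*u‖² ≥ c‖u‖²`. -/
theorem estimate_of_gaps
    {H₁ H₂ H₃ : Type*} [NormedAddCommGroup H₁] [InnerProductSpace ℂ H₁] [CompleteSpace H₁]
    [NormedAddCommGroup H₂] [InnerProductSpace ℂ H₂] [CompleteSpace H₂]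
    [NormedAddCommGroup H₃] [InnerProductSpace ℂ H₃] [CompleteSpace H₃]
    (T : H₁ →ₗ.[ℂ] H₂) (S : H₂ →ₗ.[ℂ] H₃)
    (hT_dense : Dense (T.domain : Set H₁)) (hT_closed : T.IsClosed)
    (hS_dense : Dense (S.domain : Set H₂)) (hS_closed : S.IsClosed)
    (hST : LinearMap.range T.toFun ≤ (LinearMap.ker S.toFun).map S.domain.subtype)
    (c : ℝ) (hc : 0 < c)
    (hT_gap : ∀ a : T.domain,
      (a : H₁) ∈ ((LinearMap.ker T.toFun).map T.domain.subtype)ᗮ →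
        c * ‖(a : H₁)‖ ^ 2 ≤ ‖T a‖ ^ 2)
    (hS_gap : ∀ b : S.adjoint.domain,
      (b : H₃) ∈ ((LinearMap.ker S.adjoint.toFun).map S.adjoint.domain.subtype)ᗮ →
        c * ‖(b : H₃)‖ ^ 2 ≤ ‖S.adjoint b‖ ^ 2) :
    ∀ (u : H₂) (huS : u ∈ S.domain) (huT : u ∈ T.adjoint.domain),
      u ∈ (((LinearMap.ker S.toFun).map S.domain.subtype) ⊓
          ((LinearMap.ker T.adjoint.toFun).map T.adjoint.domain.subtype))ᗮ →
        c * ‖u‖ ^ 2 ≤ ‖S ⟨u, huS⟩‖ ^ 2 + ‖T.adjoint ⟨u, huT⟩‖ ^ 2 := by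
  intro u huS huT hu
  set K := (LinearMap.ker S.toFun).map S.domain.subtype with hK
  set L := (LinearMap.ker T.adjoint.toFun).map T.adjoint.domain.subtype with hL
  have hKc : IsClosed (K : Set H₂) := EstGaps.isClosed_kerMap S hS_closed
  haveI : CompleteSpace K := hKc.completeSpace_coe
  -- the orthogonal complement of `K` lies in `Ker T*`
  have hKL : ∀ w ∈ Kᗮ, w ∈ L := fun w hw =>
    (EstGaps.mem_kerMap T.adjoint w).2 <| EstGaps.range_orth_adjoint T hT_dense w fun a =>
      (Submodule.mem_orthogonal' _ _).1 hw _ (hST ⟨a, rfl⟩)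
  set p := K.starProjection u with hp
  have hpK : p ∈ K := K.starProjection_apply_mem u
  have hq : u - p ∈ Kᗮ := K.sub_starProjection_mem_orthogonal u
  have hsum : ‖u‖ ^ 2 = ‖p‖ ^ 2 + ‖u - p‖ ^ 2 := by
    have h0 : inner ℂ p (u - p) = 0 := (Submodule.mem_orthogonal _ _).1 hq _ hpK
    have := norm_add_sq_eq_norm_sq_add_norm_sq_of_inner_eq_zero p (u - p) h0
    rw [add_sub_cancel] at this
    rw [sq, sq, sq, this]
  have hpH : ∀ w ∈ L, inner ℂ w p = 0 := by
    intro w hw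
    have hw2 : w - K.starProjection w ∈ Kᗮ := K.sub_starProjection_mem_orthogonal w
    have hw1 : K.starProjection w ∈ K := K.starProjection_apply_mem w
    have hw3 : K.starProjection w ∈ L := by
      have := L.sub_mem hw (hKL _ hw2)
      rwa [sub_sub_cancel] at this
    have e1 : inner ℂ (K.starProjection w) u = 0 :=
      (Submodule.mem_orthogonal _ _).1 hu _ ⟨hw1, hw3⟩
    have e2 : inner ℂ (K.starProjection w) (u - p) = 0 :=
      (Submodule.mem_orthogonal _ _).1 hq _ hw1
    have e3 : inner ℂ (w - K.starProjection w) p = 0 :=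
      (Submodule.mem_orthogonal' _ _).1 hw2 _ hpK
    rw [inner_sub_right, e1, zero_sub, neg_eq_zero] at e2
    rwa [inner_sub_left, e2, sub_zero] at e3
  have hTpart : c * ‖p‖ ^ 2 ≤ ‖T.adjoint ⟨u, huT⟩‖ ^ 2 := by
    refine EstGaps.key T hT_closed c hc hT_gap p _ ?_ ?_
    · intro a
      rw [LinearPMap.adjoint_isFormalAdjoint hT_dense ⟨u, huT⟩ a]
      have : inner ℂ (u - p) (T a) = 0 :=
        (Submodule.mem_orthogonal' _ _).1 hq _ (hST ⟨a, rfl⟩)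
      rwa [inner_sub_left, sub_eq_zero] at this
    · rw [← Submodule.orthogonal_orthogonal_eq_closure, Submodule.mem_orthogonal]
      intro w hw
      refine hpH w ((EstGaps.mem_kerMap T.adjoint w).2 <|
        EstGaps.range_orth_adjoint T hT_dense w fun a => ?_)
      exact (Submodule.mem_orthogonal' _ _).1 hw _ ⟨a, rfl⟩
  have hSpart : c * ‖u - p‖ ^ 2 ≤ ‖S ⟨u, huS⟩‖ ^ 2 := by
    refine EstGaps.key S.adjoint (LinearPMap.adjoint_isClosed hS_dense) c hc hS_gap (u - p) _ ?_ ?_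
    · intro b
      obtain ⟨hpd, hp0⟩ := (EstGaps.mem_kerMap S p).1 hpK
      have f1 := (LinearPMap.adjoint_isFormalAdjoint hS_dense).symm ⟨u, huS⟩ b
      have f2 := (LinearPMap.adjoint_isFormalAdjoint hS_dense).symm ⟨p, hpd⟩ b
      rw [hp0, inner_zero_left] at f2
      rw [f1, inner_sub_left, ← f2, sub_zero]
    · rw [← Submodule.orthogonal_orthogonal_eq_closure, Submodule.mem_orthogonal]
      intro w hw
      refine (Submodule.mem_orthogonal _ _).1 hq _
        (EstGaps.adjoint_range_orth S hS_dense hS_closed w fun b => ?_)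
      exact (Submodule.mem_orthogonal _ _).1 hw _ ⟨b, rfl⟩
  rw [hsum, mul_add]
  linarith
end
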